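/- For every integer radius r ≥ 1, let A(r) = 2 · Σ_{n=0}^{2r−1} 1/a_n be the arithmetic mean and H(r) = 8r² / ( Σ_{n=0}^{2r−1} a_n ) the harmonic mean of the values π_n = 4r/a_n along the signum circle path of radius r, where a_n = x_n + y_n. Then the sequence A(r)·H(r) + 2·H(r) − 16 converges to 0 as r → ∞. -/

import Mathlib

open Filter Finset Real

/-- The signum function of the paper: `-1` if `t ≤ 0` and `1` if `t > 0`. -/
noncomputable def sgn (t : ℝ) : ℝ := if t ≤ 0 then -1 else 1

/-- The signum term `sₙ` determining the step of the path, computed from the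
current position `(x, y)`, with `a = x + y` and `c = r - n - 1`. -/
noncomputable def sStep (r n : ℕ) (x y : ℝ) : ℝ :=
  -sgn ((x + y) + (r : ℝ) / Real.sqrt 2 *
    (Real.sqrt (((x + y) - 1) ^ 2 + ((r : ℝ) - n - 1) ^ 2) -
     Real.sqrt (((x + y) + 1) ^ 2 + ((r : ℝ) - n - 1) ^ 2)))

/-- The signum circle path of radius `r`: `x₀ = r`, `y₀ = 0`,
`xₙ₊₁ = xₙ + sₙ/2 - 1/2`, `yₙ₊₁ = yₙ + sₙ/2 + 1/2`. -/
noncomputable def circlePath (r : ℕ) : ℕ → ℝ × ℝ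
  | 0 => ((r : ℝ), 0)
  | n + 1 =>
    let p := circlePath r n
    let s := sStep r n p.1 p.2
    (p.1 + s / 2 - 1 / 2, p.2 + s / 2 + 1 / 2)

/-- The signum term `sₙ` along the signum circle path of radius `r`. -/
noncomputable def sTerm (r n : ℕ) : ℝ := sStep r n (circlePath r n).1 (circlePath r n).2


lemma riemann_aux (g : ℝ → ℝ) (hg : ContinuousOn g (Set.Icc (-1) 1)) :
    Tendsto (fun r : ℕ => (1 / (r : ℝ)) * ∑ n ∈ Finset.range (2 * r),
      g (((r : ℝ) - n - 1) / r)) atTop (nhds (∫ t in (-1 : ℝ)..1, g t)) := by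
  have huc := isCompact_Icc.uniformContinuousOn_of_continuous hg
  rw [Metric.uniformContinuousOn_iff] at huc
  rw [Metric.tendsto_atTop]
  intro ε hε
  obtain ⟨δ, hδ, H⟩ := huc (ε / 4) (by positivity)
  obtain ⟨N, hN⟩ := exists_nat_gt (1 / δ)
  refine ⟨N + 1, fun r hr => ?_⟩
  have hr0 : (0 : ℝ) < r := by
    have : 0 < r := by omega
    exact_mod_cast this
  have hrδ : 1 / (r : ℝ) < δ := by
    have h1 : (N : ℝ) + 1 ≤ r := by exact_mod_cast hr
    rw [div_lt_iff₀ hδ] at hN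
    rw [div_lt_iff₀ hr0]
    nlinarith
  set p : ℕ → ℝ := fun n => ((r : ℝ) - n) / r with hp
  have hpm : ∀ n ≤ 2 * r, p n ∈ Set.Icc (-1 : ℝ) 1 := by
    intro n hn
    have h1 : (n : ℝ) ≤ 2 * r := by exact_mod_cast hn
    have h2 : (0 : ℝ) ≤ n := n.cast_nonneg
    constructor
    · rw [hp, le_div_iff₀ hr0]; linarith
    · rw [hp, div_le_iff₀ hr0]; linarith
  have hps : ∀ n, p n - p (n + 1) = 1 / r := by
    intro n; simp only [hp]; push_cast; field_simp; ring
  have hsub : ∀ n < 2 * r, Set.uIcc (p (n+1)) (p n) ⊆ Set.Icc (-1) 1 := by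
    intro n hn
    exact Set.uIcc_subset_Icc (hpm _ (by omega)) (hpm _ (by omega))
  have hint : ∀ n < 2 * r, IntervalIntegrable g MeasureTheory.volume (p n) (p (n+1)) := by
    intro n hn
    exact ((hg.mono (hsub n hn)).intervalIntegrable).symm
  have hsum := intervalIntegral.sum_integral_adjacent_intervals hint
  have hp0 : p 0 = 1 := by simp [hp, hr0.ne']
  have hp1 : p (2 * r) = -1 := by simp only [hp]; push_cast; field_simp; ring
  rw [hp0, hp1, intervalIntegral.integral_symm] at hsum
  have hI : ∫ t in (-1 : ℝ)..1, g t = ∑ n ∈ Finset.range (2 * r), ∫ t in (p (n+1))..(p n), g t := by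
    rw [← neg_inj, ← hsum, ← Finset.sum_neg_distrib]
    exact Finset.sum_congr rfl fun n _ => intervalIntegral.integral_symm _ _
  rw [hI, Real.dist_eq, Finset.mul_sum, ← Finset.sum_sub_distrib]
  have key : ∀ n ∈ Finset.range (2 * r),
      |1 / (r : ℝ) * g (((r : ℝ) - n - 1) / r) - ∫ t in (p (n+1))..(p n), g t| ≤ ε / 4 * (1 / r) := by
    intro n hn
    have hn := Finset.mem_range.mp hn
    have e1 : ((r : ℝ) - n - 1) / r = p (n+1) := by simp only [hp]; push_cast; ring
    have e2 : 1 / (r : ℝ) * g (p (n+1)) = ∫ t in (p (n+1))..(p n), g (p (n+1)) := by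
      rw [intervalIntegral.integral_const, hps]; simp
    have hle : p (n+1) ≤ p n := by
      have := hps n
      have : 0 < 1 / (r : ℝ) := by positivity
      linarith
    rw [e1, e2, ← intervalIntegral.integral_sub (by simp) (hint n hn).symm]
    have := intervalIntegral.norm_integral_le_of_norm_le_const (a := p (n+1)) (b := p n)
      (f := fun t => g (p (n+1)) - g t) (C := ε / 4) ?_
    · rw [hps, abs_of_pos (by positivity : 0 < 1 / (r : ℝ))] at this
      exact this
    · intro t ht
      rw [Set.uIoc_of_le hle] at ht
      have htm : t ∈ Set.Icc (-1 : ℝ) 1 :=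
        ⟨(hpm (n+1) (by omega)).1.trans ht.1.le, ht.2.trans (hpm n (by omega)).2⟩
      refine (H _ (hpm (n+1) (by omega)) t htm ?_).le
      rw [Real.dist_eq, abs_lt]
      have := hps n
      constructor <;> linarith [ht.1, ht.2]
  calc _ ≤ ∑ n ∈ Finset.range (2 * r), _ := Finset.abs_sum_le_sum_abs _ _
    _ ≤ ∑ n ∈ Finset.range (2 * r), ε / 4 * (1 / r) := Finset.sum_le_sum key
    _ = ε / 2 := by simp; field_simp; ring
    _ < ε := by linarith

lemma gpos {t : ℝ} (ht : t ∈ Set.Icc (-1 : ℝ) 1) : 0 < 2 - t ^ 2 := by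
  nlinarith [ht.1, ht.2]

lemma gcont : ContinuousOn (fun t : ℝ => √(2 - t ^ 2)) (Set.Icc (-1) 1) := by fun_prop

lemma gicont : ContinuousOn (fun t : ℝ => 1 / √(2 - t ^ 2)) (Set.Icc (-1) 1) :=
  continuousOn_const.div gcont fun t ht => (Real.sqrt_pos.mpr (gpos ht)).ne'

lemma int_rel : ∫ t in (-1 : ℝ)..1, √(2 - t ^ 2) = (∫ t in (-1 : ℝ)..1, 1 / √(2 - t ^ 2)) + 1 := by
  have hu : Set.uIcc (-1 : ℝ) 1 = Set.Icc (-1) 1 := Set.uIcc_of_le (by norm_num)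
  have i1 : IntervalIntegrable (fun t : ℝ => √(2 - t ^ 2)) MeasureTheory.volume (-1) 1 :=
    ContinuousOn.intervalIntegrable (by rw [hu]; exact gcont)
  have i2 : IntervalIntegrable (fun t : ℝ => 1 / √(2 - t ^ 2)) MeasureTheory.volume (-1) 1 :=
    ContinuousOn.intervalIntegrable (by rw [hu]; exact gicont)
  have h := intervalIntegral.integral_eq_sub_of_hasDerivAt (a := -1) (b := 1)
    (f := fun t : ℝ => t * √(2 - t ^ 2) / 2) (f' := fun t => √(2 - t ^ 2) - 1 / √(2 - t ^ 2)) ?_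
    (i1.sub i2)
  · rw [intervalIntegral.integral_sub i1 i2] at h
    norm_num at h ⊢
    linarith
  · intro t ht
    rw [hu] at ht
    have hp := gpos ht
    have hs := Real.sqrt_pos.mpr hp
    have hsq := Real.sq_sqrt hp.le
    have d1 : HasDerivAt (fun t : ℝ => 2 - t ^ 2) (-(2 * t)) t := by
      simpa using (hasDerivAt_pow 2 t).const_sub 2
    have d2 := ((hasDerivAt_id t).mul (d1.sqrt hp.ne')).div_const 2
    refine d2.congr_deriv ?_
    simp only [id]
    field_simp
    nlinarith

lemma sStep_cases (r n : ℕ) (x y : ℝ) (hr : 0 < r) (ha : 0 < x + y) :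
    (sStep r n x y = 1 ∧ (x + y) ^ 2 + ((r : ℝ) - n - 1) ^ 2 ≤ 2 * r ^ 2) ∨
    (sStep r n x y = -1 ∧ 2 * (r : ℝ) ^ 2 - 1 < (x + y) ^ 2 + ((r : ℝ) - n - 1) ^ 2) := by
  have hr0 : (0 : ℝ) < r := by exact_mod_cast hr
  unfold sStep sgn
  generalize x + y = a at *
  generalize (r : ℝ) - n - 1 = c
  have hp2 := Real.sq_sqrt (show 0 ≤ (a + 1) ^ 2 + c ^ 2 by positivity)
  have hm2 := Real.sq_sqrt (show 0 ≤ (a - 1) ^ 2 + c ^ 2 by positivity)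
  have hp : 0 < √((a + 1) ^ 2 + c ^ 2) := Real.sqrt_pos.mpr (by positivity)
  have hm : 0 ≤ √((a - 1) ^ 2 + c ^ 2) := Real.sqrt_nonneg _
  generalize √((a + 1) ^ 2 + c ^ 2) = p at *
  generalize √((a - 1) ^ 2 + c ^ 2) = m at *
  have hw : 0 < √(2 : ℝ) := by positivity
  have hw2 : √(2 : ℝ) ^ 2 = 2 := Real.sq_sqrt (by norm_num)
  generalize √(2 : ℝ) = w at *
  have e : a + r / w * (m - p) = a * (w * (p + m) - 4 * r) / (w * (p + m)) := by
    have : p + m ≠ 0 := by positivity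
    field_simp
    linear_combination (-(r : ℝ)) * (hp2 - hm2)
  have hpm : 0 < w * (p + m) := by positivity
  have hwsq : (w * (p + m)) ^ 2 = 2 * (p + m) ^ 2 := by rw [mul_pow, hw2]
  rw [e]
  split_ifs with h
  · left
    refine ⟨by norm_num, ?_⟩
    rw [div_le_iff₀ hpm, zero_mul] at h
    have h1 : w * (p + m) ≤ 4 * r := by
      by_contra hh
      push Not at hh
      have : 0 < a * (w * (p + m) - 4 * r) := mul_pos ha (by linarith)
      linarith
    have h2 : (w * (p + m)) ^ 2 ≤ (4 * r) ^ 2 := pow_le_pow_left₀ hpm.le h1 2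
    have h3 : a ^ 2 + c ^ 2 - 1 ≤ p * m := by
      refine (abs_le_of_sq_le_sq' ?_ (by positivity)).2
      rw [mul_pow, hp2, hm2]; nlinarith [sq_nonneg c]
    nlinarith
  · right
    refine ⟨by norm_num, ?_⟩
    push Not at h
    have h1 : 4 * r < w * (p + m) := by
      by_contra hh
      push Not at hh
      have : a * (w * (p + m) - 4 * r) ≤ 0 := mul_nonpos_of_nonneg_of_nonpos ha.le (by linarith)
      have := div_nonpos_of_nonpos_of_nonneg this hpm.le
      linarith
    have h2 : (4 * (r:ℝ)) ^ 2 < (w * (p + m)) ^ 2 := pow_lt_pow_left₀ h1 (by positivity) (by norm_num)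
    nlinarith [sq_nonneg (p - m)]

noncomputable def aSeq (r n : ℕ) : ℝ := (circlePath r n).1 + (circlePath r n).2

lemma aSeq_succ (r n : ℕ) : aSeq r (n + 1) = aSeq r n + sStep r n (circlePath r n).1 (circlePath r n).2 := by
  simp only [aSeq, circlePath]; ring

lemma aSeq_inv (r : ℕ) (hr : 5 ≤ r) (n : ℕ) (hn : n < 2 * r) :
    (r : ℝ) - 2 < aSeq r n ∧ aSeq r n ≤ 2 * r ∧
    |(aSeq r n) ^ 2 + ((r : ℝ) - n - 1) ^ 2 - 2 * (r : ℝ) ^ 2| ≤ 10 * (r : ℝ) := by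
  have hr5 : (5 : ℝ) ≤ r := by exact_mod_cast hr
  induction n with
  | zero =>
    simp only [aSeq, circlePath]
    refine ⟨by linarith, by linarith, ?_⟩
    rw [abs_le]; push_cast; constructor <;> nlinarith
  | succ n ih =>
    obtain ⟨h1, h2, h3⟩ := ih (by omega)
    rw [abs_le] at h3 ⊢
    have hc := sStep_cases r n (circlePath r n).1 (circlePath r n).2 (by omega)
      (by change 0 < aSeq r n; linarith)
    have hsucc := aSeq_succ r n
    rw [hsucc]
    change (_ ∧ (aSeq r n) ^ 2 + _ ≤ _) ∨ (_ ∧ _ < (aSeq r n) ^ 2 + _) at hc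
    have hn1 : (n : ℝ) + 2 ≤ 2 * r := by
      have : n + 2 ≤ 2 * r := by omega
      exact_mod_cast this
    have hn0 : (0 : ℝ) ≤ n := n.cast_nonneg
    push_cast
    have hcc : (r : ℝ) - (n + 1) - 1 = (r : ℝ) - n - 1 - 1 := by ring
    rw [hcc]
    have c1 : (r : ℝ) - n - 1 ≤ r - 1 := by linarith
    have c2 : -(r : ℝ) + 1 ≤ r - n - 1 := by linarith
    generalize aSeq r n = a at *
    generalize (r : ℝ) - n - 1 = c at *
    have hc2 : c ^ 2 ≤ (r - 1) ^ 2 := by nlinarith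
    clear hsucc ih hcc
    obtain ⟨h3, h4⟩ := h3
    rcases hc with ⟨hs, hE⟩ | ⟨hs, hE⟩
    · rw [hs]
      have : a ≤ 2 * r - 1 := by nlinarith [sq_nonneg c]
      refine ⟨by linarith, by linarith, by nlinarith, by nlinarith⟩
    · rw [hs]
      have hra : (r : ℝ) < a := by
        by_contra hh
        push Not at hh
        have : a ^ 2 ≤ (r : ℝ) ^ 2 := pow_le_pow_left₀ (by linarith) hh 2
        nlinarith
      refine ⟨by linarith, by linarith, by nlinarith, by nlinarith⟩

theorem arithmetic_harmonic_mean_identity :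
    Filter.Tendsto (fun r : ℕ =>
      (2 * ∑ n ∈ Finset.range (2 * r),
          1 / ((circlePath r n).1 + (circlePath r n).2)) *
        (8 * (r : ℝ) ^ 2 / ∑ n ∈ Finset.range (2 * r),
          ((circlePath r n).1 + (circlePath r n).2)) +
      2 * (8 * (r : ℝ) ^ 2 / ∑ n ∈ Finset.range (2 * r),
          ((circlePath r n).1 + (circlePath r n).2)) - 16)
      Filter.atTop (nhds 0) := by
  change Tendsto (fun r : ℕ =>
      (2 * ∑ n ∈ Finset.range (2 * r), 1 / aSeq r n) *
        (8 * (r : ℝ) ^ 2 / ∑ n ∈ Finset.range (2 * r), aSeq r n) +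
      2 * (8 * (r : ℝ) ^ 2 / ∑ n ∈ Finset.range (2 * r), aSeq r n) - 16) atTop (nhds 0)
  have R1 := riemann_aux _ gcont
  have R2 := riemann_aux _ gicont
  rw [int_rel] at R1
  have hJ : 0 ≤ ∫ t in (-1 : ℝ)..1, 1 / √(2 - t ^ 2) :=
    intervalIntegral.integral_nonneg (by norm_num) fun t _ => by positivity
  generalize (∫ t in (-1 : ℝ)..1, 1 / √(2 - t ^ 2)) = J at *
  -- pointwise comparison
  have cmp : ∀ r : ℕ, 5 ≤ r → ∀ n ∈ Finset.range (2 * r),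
      |aSeq r n / r - √(2 - (((r : ℝ) - n - 1) / r) ^ 2)| ≤ 10 / r ∧
      |1 / aSeq r n - 1 / r * (1 / √(2 - (((r : ℝ) - n - 1) / r) ^ 2))| ≤ 20 / (r:ℝ) ^ 2 := by
    intro r hr n hn
    have hn := Finset.mem_range.mp hn
    obtain ⟨h1, h2, h3⟩ := aSeq_inv r hr n hn
    have hr5 : (5 : ℝ) ≤ r := by exact_mod_cast hr
    have hn1 : (n : ℝ) + 1 ≤ 2 * r := by exact_mod_cast hn
    have hn0 : (0 : ℝ) ≤ n := n.cast_nonneg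
    have c1 : (r : ℝ) - n - 1 ≤ r := by linarith
    have c2 : -(r : ℝ) ≤ r - n - 1 := by linarith
    generalize aSeq r n = a at *
    generalize (r : ℝ) - n - 1 = c at *
    have hr0 : (0 : ℝ) < r := by linarith
    have ht : 1 ≤ 2 - (c / r) ^ 2 := by
      have : (c / r) ^ 2 ≤ 1 := by
        rw [div_pow, div_le_one (by positivity)]; nlinarith
      linarith
    have hg2 := Real.sq_sqrt (show 0 ≤ 2 - (c / r) ^ 2 by linarith)
    have hg1 : 1 ≤ √(2 - (c / r) ^ 2) := Real.one_le_sqrt.mpr ht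
    generalize √(2 - (c / r) ^ 2) = g at *
    have hb : (r * g) ^ 2 = 2 * r ^ 2 - c ^ 2 := by
      rw [mul_pow, hg2]; field_simp
    have ha0 : 0 < a := by linarith
    have hfac : |a - r * g| * (a + r * g) ≤ 10 * r := by
      rw [← abs_of_pos (show 0 < a + r * g by positivity), ← abs_mul]
      have : (a - r * g) * (a + r * g) = a ^ 2 + c ^ 2 - 2 * r ^ 2 := by linear_combination -hb
      rw [this]; exact h3
    have hrg : (r : ℝ) ≤ r * g := by nlinarith
    have hd : |a - r * g| ≤ 10 := by
      have := abs_nonneg (a - r * g)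
      by_contra hh
      push Not at hh
      nlinarith
    constructor
    · have : a / r - g = (a - r * g) / r := by field_simp
      rw [this, abs_div, abs_of_pos hr0]
      gcongr
    · have : 1 / a - 1 / r * (1 / g) = -(a - r * g) / (a * (r * g)) := by field_simp; ring
      rw [this, abs_div, abs_neg, abs_of_pos (show 0 < a * (r * g) by positivity),
        div_le_div_iff₀ (by positivity) (by positivity)]
      have : (r:ℝ) ^ 2 / 2 ≤ a * (r * g) := by
        have : (r : ℝ) / 2 ≤ a := by linarith
        calc (r:ℝ) ^ 2 / 2 = r / 2 * r := by ring
          _ ≤ _ := by gcongr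
      nlinarith [sq_nonneg (r : ℝ)]
  have hinv (C : ℝ) : Tendsto (fun r : ℕ => C / (r : ℝ)) atTop (nhds 0) :=
    tendsto_const_div_atTop_nhds_zero_nat C
  have L1 : Tendsto (fun r : ℕ => (∑ n ∈ Finset.range (2 * r), aSeq r n) / (r : ℝ) ^ 2) atTop
      (nhds (J + 1)) := by
    have : Tendsto (fun r : ℕ => (∑ n ∈ Finset.range (2 * r), aSeq r n) / (r : ℝ) ^ 2 -
      (1 / (r : ℝ)) * ∑ n ∈ Finset.range (2 * r), √(2 - (((r : ℝ) - n - 1) / r) ^ 2)) atTop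
      (nhds 0) := by
      refine squeeze_zero_norm' ?_ (hinv 20)
      filter_upwards [eventually_ge_atTop 5] with r hr
      have hr0 : (0 : ℝ) < r := by
        have : 0 < r := by omega
        exact_mod_cast this
      have e : (∑ n ∈ Finset.range (2 * r), aSeq r n) / (r : ℝ) ^ 2 =
        (1 / (r : ℝ)) * ∑ n ∈ Finset.range (2 * r), aSeq r n / r := by
        rw [← Finset.sum_div]; field_simp
      rw [e, ← mul_sub, ← Finset.sum_sub_distrib, norm_mul, Real.norm_eq_abs, Real.norm_eq_abs,
        abs_of_pos (by positivity)]
      have : |∑ n ∈ Finset.range (2 * r), (aSeq r n / r - √(2 - (((r : ℝ) - n - 1) / r) ^ 2))|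
          ≤ ∑ n ∈ Finset.range (2 * r), 10 / (r : ℝ) :=
        (Finset.abs_sum_le_sum_abs _ _).trans (Finset.sum_le_sum fun n hn => (cmp r hr n hn).1)
      calc _ ≤ 1 / (r : ℝ) * ∑ n ∈ Finset.range (2 * r), 10 / (r : ℝ) := by gcongr
        _ = 20 / r := by simp; field_simp; ring
    simpa using this.add R1
  have L2 : Tendsto (fun r : ℕ => (∑ n ∈ Finset.range (2 * r), 1 / aSeq r n)) atTop
      (nhds J) := by
    have : Tendsto (fun r : ℕ => (∑ n ∈ Finset.range (2 * r), 1 / aSeq r n) -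
      (1 / (r : ℝ)) * ∑ n ∈ Finset.range (2 * r), 1 / √(2 - (((r : ℝ) - n - 1) / r) ^ 2)) atTop
      (nhds 0) := by
      refine squeeze_zero_norm' ?_ (hinv 40)
      filter_upwards [eventually_ge_atTop 5] with r hr
      have hr0 : (0 : ℝ) < r := by
        have : 0 < r := by omega
        exact_mod_cast this
      rw [Finset.mul_sum, ← Finset.sum_sub_distrib, Real.norm_eq_abs]
      calc _ ≤ ∑ n ∈ Finset.range (2 * r), 20 / (r : ℝ) ^ 2 :=
            (Finset.abs_sum_le_sum_abs _ _).trans (Finset.sum_le_sum fun n hn => (cmp r hr n hn).2)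
        _ = 40 / r := by simp; field_simp; ring
    simpa using this.add R2
  have L3 : Tendsto (fun r : ℕ => 8 * (r : ℝ) ^ 2 / ∑ n ∈ Finset.range (2 * r), aSeq r n) atTop
      (nhds (8 / (J + 1))) := by
    have := (tendsto_const_nhds (x := (8 : ℝ))).div L1 (by positivity)
    refine this.congr fun r => ?_
    simp only [Pi.div_apply]
    rw [div_div_eq_mul_div]
  have L := (((L2.const_mul 2).mul L3).add (L3.const_mul 2)).sub_const 16
  have e : 2 * J * (8 / (J + 1)) + 2 * (8 / (J + 1)) - 16 = 0 := by
    have : J + 1 ≠ 0 := by positivity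
    field_simp; ring
  rw [e] at L
  exact L
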